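/- arXiv:2411.19608 — 2 statements merged into one kernel-verified Lean document; each statement's English description precedes it below -/
import Mathlib

section
/- (Theorem 5.6 of Ramanujan–Berndt–Bhargava–Garvan.) For every real p with 0 ≤ p < 1, one has ₂F₁(1/3, 2/3; 1; β(p)) = γ(p) · ₂F₁(1/2, 1/2; 1; α(p)). (For such p both arguments α(p) and β(p) lie in [0,1), so both hypergeometric series converge absolutely.) -/
open Real

/-- Gauss hypergeometric function ₂F₁ defined via its power series
    (the tsum; converges absolutely for |z| < 1). -/
noncomputable def hyp2F1 (a b c z : ℝ) : ℝ :=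
  ∑' n : ℕ, ((ascPochhammer ℝ n).eval a * (ascPochhammer ℝ n).eval b /
      (ascPochhammer ℝ n).eval c) * z ^ n / (Nat.factorial n)

noncomputable def α (p : ℝ) : ℝ := p ^ 3 * (2 + p) / (1 + 2 * p)

noncomputable def β (p : ℝ) : ℝ := 27 * p ^ 2 * (1 + p) ^ 2 / (4 * (1 + p + p ^ 2) ^ 3)

noncomputable def γ (p : ℝ) : ℝ := (1 + p + p ^ 2) / Real.sqrt (1 + 2 * p)

/-!
Both sides solve the same second-order equation `(P y')' = (2/9) β' y` on `[0, 1)`. Indeed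
`F = ₂F₁(a, 1 - a; 1; ·)` satisfies `(z (1 - z) F')' = a (1 - a) F`; the left side arises from this
equation by the substitution `z = β`, the right side by the substitution `z = α` followed by
multiplication with `γ`. The Wronskian `P (f' g - f g')` of two solutions is constant, and since `P`
vanishes at `0` it is zero, so the quotient of the two sides is constant. At `p = 0` both are `1`.
-/

open Set FormalMultilinearSeries

theorem enorm_lt_one_iff {E : Type*} [SeminormedAddGroup E] {x : E} : ‖x‖ₑ < 1 ↔ ‖x‖ < 1 := by
  rw [← ofReal_norm, ENNReal.ofReal_lt_one]

section PowerSeries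

variable {𝕜 : Type*} [NontriviallyNormedField 𝕜]

theorem hasFPowerSeriesOnBall_deriv [CompleteSpace 𝕜] {f : 𝕜 → 𝕜}
    {s : FormalMultilinearSeries 𝕜 𝕜 𝕜} {x : 𝕜} {r : ENNReal} (h : HasFPowerSeriesOnBall f s x r) :
    HasFPowerSeriesOnBall (deriv f) (ofScalars 𝕜 fun n ↦ (n + 1) * s.coeff (n + 1)) x r := by
  have key := (ContinuousLinearMap.apply 𝕜 𝕜 (1 : 𝕜)).comp_hasFPowerSeriesOnBall h.fderiv
  convert key using 1 <;> ext <;> simp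

theorem hasSum_mul_pow_of_hasFPowerSeriesOnBall {f : 𝕜 → 𝕜} {u : ℕ → 𝕜} {r : ENNReal}
    (h : HasFPowerSeriesOnBall f (ofScalars 𝕜 u) 0 r) {z : 𝕜} (hz : ‖z‖ₑ < r) :
    HasSum (fun n ↦ u n * z ^ n) (f z) := by
  simpa [ofScalars_apply_eq, mul_comm] using h.hasSum (y := z) (by simpa using hz)

theorem hasSum_mul_of_hasSum_succ {v : ℕ → 𝕜} {z t : 𝕜} (h0 : v 0 = 0)
    (h : HasSum (fun n ↦ v (n + 1) * z ^ n) t) : HasSum (fun n ↦ v n * z ^ n) (z * t) := by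
  rw [← hasSum_nat_add_iff' 1]
  simpa [h0, pow_succ', mul_left_comm] using h.mul_left z

end PowerSeries

section Hypergeometric

variable {𝕂 : Type*} [RCLike 𝕂] (a b c : 𝕂)

theorem one_le_radius_ordinaryHypergeometricSeries :
    1 ≤ (ordinaryHypergeometricSeries 𝕂 a b c).radius := by
  by_cases h : ∀ k : ℕ, (k : 𝕂) ≠ -a ∧ (k : 𝕂) ≠ -b ∧ (k : 𝕂) ≠ -c
  · exact (ordinaryHypergeometricSeries_radius_eq_one 𝕂 a b c h).ge
  · push Not at h
    obtain ⟨k, hk⟩ := h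
    have hk' : a = -k ∨ b = -k ∨ c = -k := by
      simp only [eq_neg_iff_add_eq_zero, ne_eq] at hk ⊢
      grind
    rcases hk' with rfl | rfl | rfl
    · simp [ordinaryHypergeometric_radius_top_of_neg_nat₁]
    · simp [ordinaryHypergeometric_radius_top_of_neg_nat₂]
    · simp [ordinaryHypergeometric_radius_top_of_neg_nat₃]

theorem hasFPowerSeriesOnBall_ordinaryHypergeometric :
    HasFPowerSeriesOnBall (₂F₁ a b c)
      (ofScalars 𝕂 (ordinaryHypergeometricCoefficient a b c)) 0 1 :=
  have hr := one_le_radius_ordinaryHypergeometricSeries a b c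
  (FormalMultilinearSeries.hasFPowerSeriesOnBall _ (one_pos.trans_le hr)).mono one_pos hr

variable {a b c}

theorem analyticAt_ordinaryHypergeometric {z : 𝕂} (hz : ‖z‖ < 1) : AnalyticAt 𝕂 (₂F₁ a b c) z :=
  (hasFPowerSeriesOnBall_ordinaryHypergeometric a b c).analyticAt_of_mem
    (by simpa [enorm_lt_one_iff] using hz)

theorem ordinaryHypergeometricCoefficient_succ {n : ℕ} (hc : (n : 𝕂) ≠ -c) :
    (n + 1) * (c + n) * ordinaryHypergeometricCoefficient a b c (n + 1) =
      (a + n) * (b + n) * ordinaryHypergeometricCoefficient a b c n := by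
  have hcn : c + n ≠ 0 := by grind
  have hn : (n : 𝕂) + 1 ≠ 0 := by exact_mod_cast n.succ_ne_zero
  simp only [ordinaryHypergeometricCoefficient, ascPochhammer_succ_eval, Nat.factorial_succ,
    Nat.cast_mul, Nat.cast_succ, mul_inv]
  field_simp

theorem ordinaryHypergeometric_ode (hc : ∀ n : ℕ, (n : 𝕂) ≠ -c) {z : 𝕂} (hz : ‖z‖ < 1) :
    z * (1 - z) * deriv (deriv (₂F₁ a b c)) z + (c - (a + b + 1) * z) * deriv (₂F₁ a b c) z =
      a * b * ₂F₁ a b c z := by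
  have hz' : ‖z‖ₑ < 1 := enorm_lt_one_iff.2 hz
  have hF := hasFPowerSeriesOnBall_ordinaryHypergeometric a b c
  have hF' := hasFPowerSeriesOnBall_deriv hF
  have hF'' := hasFPowerSeriesOnBall_deriv hF'
  simp only [coeff_ofScalars] at hF' hF''
  have sF := hasSum_mul_pow_of_hasFPowerSeriesOnBall hF hz'
  have sF' := hasSum_mul_pow_of_hasFPowerSeriesOnBall hF' hz'
  have sF'' := hasSum_mul_pow_of_hasFPowerSeriesOnBall hF'' hz'
  set u := ordinaryHypergeometricCoefficient a b c
  have szF' : HasSum (fun n : ℕ ↦ n * u n * z ^ n) (z * deriv (₂F₁ a b c) z) :=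
    hasSum_mul_of_hasSum_succ (by simp) (by simpa using sF')
  have szF'' : HasSum (fun n : ℕ ↦ n * ((n + 1) * u (n + 1)) * z ^ n)
      (z * deriv (deriv (₂F₁ a b c)) z) :=
    hasSum_mul_of_hasSum_succ (by simp) (by simpa using sF'')
  have szzF'' : HasSum (fun n : ℕ ↦ (n - 1) * (n * u n) * z ^ n)
      (z * (z * deriv (deriv (₂F₁ a b c)) z)) :=
    hasSum_mul_of_hasSum_succ (by simp) (by simpa using szF'')
  have hL := (szF''.sub szzF'').add ((sF'.mul_left c).sub (szF'.mul_left (a + b + 1)))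
  have hR : HasSum _ (a * b * ₂F₁ a b c z) := sF.mul_left (a * b)
  refine Eq.trans (by ring) (hL.unique (hR.congr_fun fun n ↦ ?_))
  linear_combination z ^ n * ordinaryHypergeometricCoefficient_succ (a := a) (b := b) (hc n)

end Hypergeometric

section RealHypergeometric

variable {a b c z : ℝ}

theorem hyp2F1_eq_ordinaryHypergeometric (a b c : ℝ) : hyp2F1 a b c = ₂F₁ a b c := by
  ext z
  rw [hyp2F1, ordinaryHypergeometric_eq_tsum]
  exact tsum_congr fun n ↦ by rw [smul_eq_mul]; ring

theorem hyp2F1_zero (a b c : ℝ) : hyp2F1 a b c 0 = 1 := by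
  rw [hyp2F1_eq_ordinaryHypergeometric, ordinaryHypergeometric_zero]

theorem hyp2F1_pos (ha : 0 < a) (hb : 0 < b) (hc : 0 < c) (hz0 : 0 ≤ z) (hz1 : z < 1) :
    0 < hyp2F1 a b c z := by
  rw [hyp2F1_eq_ordinaryHypergeometric]
  have hz : ‖z‖ₑ < 1 := by rwa [enorm_lt_one_iff, norm_of_nonneg hz0]
  have hsum := hasSum_mul_pow_of_hasFPowerSeriesOnBall
    (hasFPowerSeriesOnBall_ordinaryHypergeometric a b c) hz
  have hcoeff (n : ℕ) : 0 ≤ ordinaryHypergeometricCoefficient a b c n := by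
    have := ascPochhammer_pos n a ha
    have := ascPochhammer_pos n b hb
    have := ascPochhammer_pos n c hc
    positivity
  calc 0 < ordinaryHypergeometricCoefficient a b c 0 * z ^ 0 := by simp
    _ ≤ ₂F₁ a b c z := le_hasSum hsum 0 fun n _ ↦ mul_nonneg (hcoeff n) (pow_nonneg hz0 n)

end RealHypergeometric

/-- `f`, with derivative `f'`, solves the Sturm–Liouville equation `(P f')' = q f` on `s`.
The derivative is a parameter rather than `derivWithin f s`, so that explicit formulas for it can be
used; all derivatives are one-sided at endpoints of `s`. -/
structure IsSturmLiouvilleSol (P q f f' : ℝ → ℝ) (s : Set ℝ) : Prop where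
  hasDerivWithinAt : ∀ x ∈ s, HasDerivWithinAt f (f' x) s x
  hasDerivWithinAt_mul : ∀ x ∈ s, HasDerivWithinAt (fun y ↦ P y * f' y) (q x * f x) s x

namespace IsSturmLiouvilleSol

variable {P Q q r f f' g g' φ φ' : ℝ → ℝ} {s t : Set ℝ} {a b x : ℝ}

theorem comp (hf : IsSturmLiouvilleSol P q f f' t) (hφt : MapsTo φ s t)
    (hφ : ∀ x ∈ s, HasDerivWithinAt φ (φ' x) s x) (k : ℝ)
    (hQ : ∀ x ∈ s, Q x * φ' x = k * P (φ x)) (hr : ∀ x ∈ s, r x = k * q (φ x) * φ' x) :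
    IsSturmLiouvilleSol Q r (fun x ↦ f (φ x)) (fun x ↦ f' (φ x) * φ' x) s where
  hasDerivWithinAt x hx := (hf.hasDerivWithinAt _ (hφt hx)).comp x (hφ x hx) hφt
  hasDerivWithinAt_mul x hx := by
    have h := ((hf.hasDerivWithinAt_mul _ (hφt hx)).comp x (hφ x hx) hφt).const_mul k
    refine (h.congr_of_mem (fun y hy ↦ ?_) hx).congr_deriv (by rw [hr x hx]; ring)
    simp only [Function.comp_apply]
    linear_combination f' (φ y) * hQ y hy

theorem mul_left (hf : IsSturmLiouvilleSol (fun x ↦ P x * g x ^ 2) r f f' s)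
    (hg : ∀ x ∈ s, HasDerivWithinAt g (g' x) s x) (hg0 : ∀ x ∈ s, g x ≠ 0)
    (hPg : ∀ x ∈ s, HasDerivWithinAt (fun y ↦ P y * g' y) (q x * g x - r x / g x) s x) :
    IsSturmLiouvilleSol P q (fun x ↦ g x * f x) (fun x ↦ g' x * f x + g x * f' x) s where
  hasDerivWithinAt x hx := (hg x hx).mul (hf.hasDerivWithinAt x hx)
  hasDerivWithinAt_mul x hx := by
    have h := ((hPg x hx).mul (hf.hasDerivWithinAt x hx)).add
      ((hf.hasDerivWithinAt_mul x hx).div (hg x hx) (hg0 x hx))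
    refine (h.congr_of_mem (fun y hy ↦ ?_) hx).congr_deriv ?_
    · have := hg0 y hy
      simp only [Pi.add_apply, Pi.mul_apply, Pi.div_apply]
      field_simp
    · have := hg0 x hx
      field_simp
      ring

theorem hasDerivWithinAt_wronskian (hf : IsSturmLiouvilleSol P q f f' s)
    (hg : IsSturmLiouvilleSol P q g g' s) (hx : x ∈ s) :
    HasDerivWithinAt (fun y ↦ P y * (f' y * g y - f y * g' y)) 0 s x := by
  have h := ((hf.hasDerivWithinAt_mul x hx).mul (hg.hasDerivWithinAt x hx)).sub
    ((hf.hasDerivWithinAt x hx).mul (hg.hasDerivWithinAt_mul x hx))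
  refine (h.congr_of_mem (fun y _ ↦ ?_) hx).congr_deriv (by ring)
  simp only [Pi.sub_apply, Pi.mul_apply]
  ring

theorem wronskian_eq_zero (hf : IsSturmLiouvilleSol P q f f' (Ico a b))
    (hg : IsSturmLiouvilleSol P q g g' (Ico a b)) (hPa : P a = 0) (hx : x ∈ Ico a b)
    (hPx : P x ≠ 0) : f' x * g x - f x * g' x = 0 := by
  have ha : a ∈ Ico a b := ⟨le_rfl, hx.1.trans_lt hx.2⟩
  have hconst := (convex_Ico a b).norm_image_sub_le_of_norm_hasDerivWithin_le (C := 0)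
    (fun y hy ↦ hf.hasDerivWithinAt_wronskian hg hy) (by simp) ha hx
  have hzero : P x * (f' x * g x - f x * g' x) = 0 := by
    simpa only [hPa, zero_mul, sub_zero, norm_le_zero_iff] using hconst
  exact (mul_eq_zero.1 hzero).resolve_left hPx

/-- At a zero of `P` the equation is singular, and a solution regular there is determined by its
value alone. -/
theorem mul_eq_mul_of_singular (hf : IsSturmLiouvilleSol P q f f' (Ico a b))
    (hg : IsSturmLiouvilleSol P q g g' (Ico a b)) (hPa : P a = 0) (hP : ∀ y ∈ Ioo a b, P y ≠ 0)
    (hg0 : ∀ y ∈ Ico a b, g y ≠ 0) (hx : x ∈ Ico a b) : f x * g a = f a * g x := by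
  have ha : a ∈ Ico a b := ⟨le_rfl, hx.1.trans_lt hx.2⟩
  rcases hx.1.eq_or_lt with rfl | hax
  · rfl
  have hquot (y) (hy : y ∈ Ico a b) := (hf.hasDerivWithinAt y hy).div
    (hg.hasDerivWithinAt y hy) (hg0 y hy)
  have hsub : Icc a x ⊆ Ico a b := Icc_subset_Ico_right hx.2
  obtain ⟨y, hy, hslope⟩ := exists_hasDerivAt_eq_slope (f / g) _ hax
    (fun y hy ↦ (hquot y (hsub hy)).continuousWithinAt.mono hsub)
    (fun y hy ↦ (hquot y (hsub (Ioo_subset_Icc_self hy))).hasDerivAt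
      (Ico_mem_nhds hy.1 (hy.2.trans hx.2)))
  have hyb : y ∈ Ioo a b := ⟨hy.1, hy.2.trans hx.2⟩
  rw [hf.wronskian_eq_zero hg hPa (Ioo_subset_Ico_self hyb) (hP y hyb), zero_div, eq_comm,
    div_eq_zero_iff, or_iff_left (sub_ne_zero.2 hax.ne'), sub_eq_zero] at hslope
  exact (div_eq_div_iff (hg0 x hx) (hg0 a ha)).1 hslope

end IsSturmLiouvilleSol

theorem isSturmLiouvilleSol_hyp2F1 {a b : ℝ} (hab : a + b = 1) :
    IsSturmLiouvilleSol (fun z ↦ z * (1 - z)) (fun _ ↦ a * b) (hyp2F1 a b 1)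
      (deriv (hyp2F1 a b 1)) (Ioo (-1) 1) := by
  rw [hyp2F1_eq_ordinaryHypergeometric]
  refine ⟨fun z hz ↦ ?_, fun z hz ↦ ?_⟩
  · have hF := analyticAt_ordinaryHypergeometric (a := a) (b := b) (c := 1) (abs_lt.2 hz)
    exact hF.differentiableAt.hasDerivAt.hasDerivWithinAt
  · have hz1 : ‖z‖ < 1 := abs_lt.2 hz
    have hF'' := (analyticAt_ordinaryHypergeometric (a := a) (b := b) (c := 1)
      hz1).deriv.differentiableAt.hasDerivAt
    have hw : HasDerivAt (fun y : ℝ ↦ y * (1 - y)) (1 - 2 * z) z :=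
      ((hasDerivAt_id' z).mul ((hasDerivAt_id' z).const_sub 1)).congr_deriv (by ring)
    have hc (n : ℕ) : (n : ℝ) ≠ -1 := by linarith [n.cast_nonneg (α := ℝ)]
    have hode := ordinaryHypergeometric_ode (a := a) (b := b) hc hz1
    refine (hw.mul hF'').hasDerivWithinAt.congr_deriv ?_
    rw [hab] at hode
    linear_combination hode

section Modulus

variable {p : ℝ}

theorem one_add_add_sq_pos (p : ℝ) : 0 < 1 + p + p ^ 2 := by nlinarith [sq_nonneg (p + 1 / 2)]

theorem one_add_two_mul_pos (hp : 0 ≤ p) : 0 < 1 + 2 * p := by positivity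

theorem one_sub_α (hp : 1 + 2 * p ≠ 0) : 1 - α p = (1 - p) * (1 + p) ^ 3 / (1 + 2 * p) := by
  rw [α, one_sub_div hp]
  ring

theorem one_sub_β (p : ℝ) :
    1 - β p = ((1 - p) * (2 + p) * (1 + 2 * p)) ^ 2 / (4 * (1 + p + p ^ 2) ^ 3) := by
  have := (one_add_add_sq_pos p).ne'
  rw [β]
  field_simp
  ring

theorem α_mem_Ico (hp : p ∈ Ico 0 1) : α p ∈ Ico 0 1 := by
  obtain ⟨hp0, hp1⟩ := hp
  have : 0 < 1 - p := sub_pos.2 hp1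
  refine ⟨by unfold α; positivity, sub_pos.1 ?_⟩
  rw [one_sub_α (by positivity)]
  positivity

theorem β_mem_Ico (hp : p ∈ Ico 0 1) : β p ∈ Ico 0 1 := by
  obtain ⟨hp0, hp1⟩ := hp
  have : 0 < 1 - p := sub_pos.2 hp1
  refine ⟨by unfold β; positivity, sub_pos.1 ?_⟩
  rw [one_sub_β]
  positivity

theorem γ_pos (hp : 0 < 1 + 2 * p) : 0 < γ p :=
  div_pos (one_add_add_sq_pos p) (sqrt_pos.2 hp)

theorem γ_sq (hp : 0 ≤ 1 + 2 * p) : γ p ^ 2 = (1 + p + p ^ 2) ^ 2 / (1 + 2 * p) := by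
  rw [γ, div_pow, sq_sqrt hp]

theorem hasDerivAt_one_add_two_mul (p : ℝ) : HasDerivAt (fun x : ℝ ↦ 1 + 2 * x) 2 p :=
  (((hasDerivAt_id' p).const_mul 2).const_add 1).congr_deriv (mul_one 2)

theorem hasDerivAt_one_add_add_sq (p : ℝ) :
    HasDerivAt (fun x : ℝ ↦ 1 + x + x ^ 2) (1 + 2 * p) p :=
  (((hasDerivAt_id' p).const_add 1).add ((hasDerivAt_id' p).pow 2)).congr_deriv (by simp)

theorem hasDerivAt_α (hp : 1 + 2 * p ≠ 0) :
    HasDerivAt α (6 * p ^ 2 * (1 + p) ^ 2 / (1 + 2 * p) ^ 2) p := by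
  have hid := hasDerivAt_id' p
  have h := ((hid.pow 3).mul (hid.const_add 2)).div (hasDerivAt_one_add_two_mul p) hp
  refine h.congr_deriv ?_
  simp only [Pi.mul_apply, Pi.pow_apply]
  field_simp
  ring

theorem hasDerivAt_β (p : ℝ) :
    HasDerivAt β (27 * p * (1 + p) * (1 + 2 * p) * (1 - p) * (2 + p) /
      (4 * (1 + p + p ^ 2) ^ 4)) p := by
  have hT := (one_add_add_sq_pos p).ne'
  have hid := hasDerivAt_id' p
  have h := (((hid.pow 2).const_mul 27).mul ((hid.const_add 1).pow 2)).div
    (((hasDerivAt_one_add_add_sq p).pow 3).const_mul 4)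
    (mul_ne_zero four_ne_zero (pow_ne_zero 3 hT))
  refine h.congr_deriv ?_
  simp only [Pi.mul_apply, Pi.pow_apply]
  field_simp
  ring

theorem hasDerivAt_γ (hp : 0 < 1 + 2 * p) :
    HasDerivAt γ (γ p * (3 * p * (1 + p) / ((1 + 2 * p) * (1 + p + p ^ 2)))) p := by
  have hT := (one_add_add_sq_pos p).ne'
  have hs := sqrt_pos.2 hp
  have hs2 := sq_sqrt hp.le
  have h := (hasDerivAt_one_add_add_sq p).div ((hasDerivAt_one_add_two_mul p).sqrt hp.ne') hs.ne'
  refine h.congr_deriv ?_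
  rw [γ]
  field_simp
  rw [hs2]
  ring

end Modulus

/-- The leading coefficient `P = β (1 - β) / β'` of the equation `(P y')' = (2/9) β' y` satisfied
by both sides of the formula, with the quotient cancelled so that it is regular at `0`. -/
noncomputable def commonCoeff (p : ℝ) : ℝ :=
  p * (1 + p) * (2 + p) * (1 - p) * (1 + 2 * p) / (4 * (1 + p + p ^ 2) ^ 2)

section CommonEquation

variable {p : ℝ}

theorem commonCoeff_zero : commonCoeff 0 = 0 := by simp [commonCoeff]

theorem commonCoeff_pos (hp : p ∈ Ioo 0 1) : 0 < commonCoeff p := by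
  obtain ⟨hp0, hp1⟩ := hp
  have : 0 < 1 - p := sub_pos.2 hp1
  unfold commonCoeff
  positivity

theorem commonCoeff_mul_deriv_β (p : ℝ) : commonCoeff p * deriv β p = β p * (1 - β p) := by
  have hT := (one_add_add_sq_pos p).ne'
  rw [(hasDerivAt_β p).deriv, one_sub_β, commonCoeff, β]
  field_simp

theorem commonCoeff_mul_γ_sq_mul_deriv_α (hp : 0 < 1 + 2 * p) :
    commonCoeff p * γ p ^ 2 * deriv α p = 3 / 2 * (α p * (1 - α p)) := by
  have hT := (one_add_add_sq_pos p).ne'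
  rw [(hasDerivAt_α hp.ne').deriv, one_sub_α hp.ne', γ_sq hp.le, commonCoeff, α]
  field_simp
  ring

/-- The quotient `P γ' / γ`, a rational function. -/
noncomputable def commonCoeffMulLogDerivγ (p : ℝ) : ℝ :=
  3 * (p * (1 + p)) ^ 2 * ((2 + p) * (1 - p)) / (4 * (1 + p + p ^ 2) ^ 3)

theorem commonCoeff_mul_deriv_γ (hp : 0 < 1 + 2 * p) :
    commonCoeff p * deriv γ p = γ p * commonCoeffMulLogDerivγ p := by
  have hT := (one_add_add_sq_pos p).ne'
  rw [(hasDerivAt_γ hp).deriv, commonCoeff, commonCoeffMulLogDerivγ, mul_left_comm,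
    div_mul_div_comm, mul_right_inj' (γ_pos hp).ne', div_eq_div_iff (by positivity) (by positivity)]
  ring

theorem hasDerivAt_commonCoeffMulLogDerivγ (p : ℝ) :
    HasDerivAt commonCoeffMulLogDerivγ
      (3 * (p * (1 + p)) * (4 - 5 * (p * (1 + p))) * (1 + 2 * p) /
        (4 * (1 + p + p ^ 2) ^ 4)) p := by
  have hT := (one_add_add_sq_pos p).ne'
  have hid := hasDerivAt_id' p
  have h := ((((hid.mul (hid.const_add 1)).pow 2).const_mul 3).mul
    ((hid.const_add 2).mul (hid.const_sub 1))).div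
    (((hasDerivAt_one_add_add_sq p).pow 3).const_mul 4)
    (mul_ne_zero four_ne_zero (pow_ne_zero 3 hT))
  refine h.congr_deriv ?_
  simp only [Pi.mul_apply, Pi.pow_apply]
  field_simp
  ring

theorem hasDerivAt_commonCoeff_mul_deriv_γ (hp : 0 < 1 + 2 * p) :
    HasDerivAt (fun x ↦ commonCoeff x * deriv γ x)
      (2 / 9 * deriv β p * γ p - 3 / 8 * deriv α p / γ p) p := by
  have hev : ∀ᶠ x in nhds p, 0 < 1 + 2 * x :=
    (hasDerivAt_one_add_two_mul p).continuousAt.eventually_const_lt hp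
  have h := (hasDerivAt_γ hp).mul (hasDerivAt_commonCoeffMulLogDerivγ p)
  refine (h.congr_of_eventuallyEq (hev.mono fun x ↦ commonCoeff_mul_deriv_γ)).congr_deriv ?_
  have hT := (one_add_add_sq_pos p).ne'
  have hγ := (γ_pos hp).ne'
  have hα : 3 / 8 * deriv α p / γ p = γ p * (3 / 8 * deriv α p / γ p ^ 2) := by field_simp
  rw [hα, γ_sq hp.le, (hasDerivAt_α hp.ne').deriv, (hasDerivAt_β p).deriv, commonCoeffMulLogDerivγ]
  field_simp
  ring

theorem isSturmLiouvilleSol_hyp2F1_comp_β :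
    IsSturmLiouvilleSol commonCoeff (fun p ↦ 2 / 9 * deriv β p)
      (fun p ↦ hyp2F1 (1/3) (2/3) 1 (β p))
      (fun p ↦ deriv (hyp2F1 (1/3) (2/3) 1) (β p) * deriv β p) (Ico 0 1) :=
  (isSturmLiouvilleSol_hyp2F1 (by norm_num)).comp
    (fun p hp ↦ Ico_subset_Ioo_left (by norm_num) (β_mem_Ico hp))
    (fun p _ ↦ (hasDerivAt_β p).differentiableAt.hasDerivAt.hasDerivWithinAt) 1
    (fun p _ ↦ by rw [commonCoeff_mul_deriv_β, one_mul]) (fun p _ ↦ by ring)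

theorem isSturmLiouvilleSol_hyp2F1_comp_α :
    IsSturmLiouvilleSol (fun p ↦ commonCoeff p * γ p ^ 2) (fun p ↦ 3 / 8 * deriv α p)
      (fun p ↦ hyp2F1 (1/2) (1/2) 1 (α p))
      (fun p ↦ deriv (hyp2F1 (1/2) (1/2) 1) (α p) * deriv α p) (Ico 0 1) :=
  (isSturmLiouvilleSol_hyp2F1 (by norm_num)).comp
    (fun p hp ↦ Ico_subset_Ioo_left (by norm_num) (α_mem_Ico hp))
    (fun _ hp ↦ (hasDerivAt_α
      (one_add_two_mul_pos hp.1).ne').differentiableAt.hasDerivAt.hasDerivWithinAt) (3 / 2)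
    (fun p hp ↦ commonCoeff_mul_γ_sq_mul_deriv_α (one_add_two_mul_pos hp.1)) (fun p _ ↦ by ring)

theorem isSturmLiouvilleSol_γ_mul_hyp2F1_comp_α :
    IsSturmLiouvilleSol commonCoeff (fun p ↦ 2 / 9 * deriv β p)
      (fun p ↦ γ p * hyp2F1 (1/2) (1/2) 1 (α p))
      (fun p ↦ deriv γ p * hyp2F1 (1/2) (1/2) 1 (α p) +
        γ p * (deriv (hyp2F1 (1/2) (1/2) 1) (α p) * deriv α p)) (Ico 0 1) :=
  isSturmLiouvilleSol_hyp2F1_comp_α.mul_left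
    (fun _ hp ↦ (hasDerivAt_γ
      (one_add_two_mul_pos hp.1)).differentiableAt.hasDerivAt.hasDerivWithinAt)
    (fun _ hp ↦ (γ_pos (one_add_two_mul_pos hp.1)).ne')
    (fun _ hp ↦ (hasDerivAt_commonCoeff_mul_deriv_γ (one_add_two_mul_pos hp.1)).hasDerivWithinAt)

end CommonEquation

/-- Theorem 5.6 of Ramanujan–Berndt–Bhargava–Garvan. -/
theorem RBBG_formula (p : ℝ) (hp0 : 0 ≤ p) (hp1 : p < 1) :
    hyp2F1 (1/3) (2/3) 1 (β p) = γ p * hyp2F1 (1/2) (1/2) 1 (α p) := by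
  have hα0 : α 0 = 0 := by simp [α]
  have hβ0 : β 0 = 0 := by simp [β]
  have hγ0 : γ 0 = 1 := by simp [γ]
  have hne : ∀ x ∈ Ico 0 1, γ x * hyp2F1 (1/2) (1/2) 1 (α x) ≠ 0 := fun x hx ↦
    have hG := hyp2F1_pos one_half_pos one_half_pos one_pos (α_mem_Ico hx).1 (α_mem_Ico hx).2
    (mul_pos (γ_pos (one_add_two_mul_pos hx.1)) hG).ne'
  have h := isSturmLiouvilleSol_hyp2F1_comp_β.mul_eq_mul_of_singular
    isSturmLiouvilleSol_γ_mul_hyp2F1_comp_α commonCoeff_zero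
    (fun x hx ↦ (commonCoeff_pos hx).ne') hne ⟨hp0, hp1⟩
  simpa only [hα0, hβ0, hγ0, hyp2F1_zero, mul_one, one_mul] using h
end

section
/- (Kummer evaluation of ₂F₁(1/2,1/2;1;−1) in integral form.) One has (2/π) · ∫₀^{π/2} dθ / √(1 + sin²θ) = Γ(1/4)² / (2π)^{3/2}, where Γ is the Gamma function. (The left-hand side equals the analytic continuation value ₂F₁(1/2, 1/2; 1; −1) via the complete elliptic integral representation.) -/
open Real

/-!
The substitution `x = sin θ` turns the Legendre form `∫ dθ / √(1 - m sin² θ)` of the complete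
elliptic integral into the Jacobi form `∫ dx / √((1 - x²)(1 - m x²))`. At `m = -1` the radicand is
`1 - x⁴`, so `u = x⁴` gives `B(1/4, 1/2) / 4`. The reflection formula eliminates `Γ(3/4)` from this
beta value, leaving only `Γ(1/4)` and `Γ(1/2) = √π`.
-/

open ProbabilityTheory (beta)

section BetaIntegral

variable {a b p : ℝ}

lemma betaIntegral_ofReal (a b : ℝ) :
    Complex.betaIntegral a b = ((∫ x in (0 : ℝ)..1, x ^ (a - 1) * (1 - x) ^ (b - 1) : ℝ) : ℂ) := by
  rw [Complex.betaIntegral, ← intervalIntegral.integral_ofReal]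
  refine intervalIntegral.integral_congr fun x hx ↦ ?_
  rw [Set.uIcc_of_le zero_le_one] at hx
  simp [Complex.ofReal_cpow hx.1, Complex.ofReal_cpow (sub_nonneg.2 hx.2)]

lemma integral_rpow_mul_one_sub_rpow (ha : 0 < a) (hb : 0 < b) :
    ∫ x in (0 : ℝ)..1, x ^ (a - 1) * (1 - x) ^ (b - 1) = beta a b := by
  rw [ProbabilityTheory.beta_eq_betaIntegralReal a b ha hb, betaIntegral_ofReal,
    Complex.ofReal_re]

lemma integral_comp_rpow {E : Type*} [NormedAddCommGroup E] [NormedSpace ℝ E]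
    (g : ℝ → E) (ha : 0 ≤ a) (hb : 0 ≤ b) (hp : 0 < p) :
    ∫ x in a..b, (p * x ^ (p - 1)) • g (x ^ p) = ∫ u in (a ^ p)..(b ^ p), g u := by
  have pos_of_mem {x : ℝ} (hx : x ∈ Set.Ioo (min a b) (max a b)) : 0 < x :=
    (le_min ha hb).trans_lt hx.1
  exact intervalIntegral.integral_deriv_smul_comp_of_deriv_nonneg
    (continuous_rpow_const hp.le).continuousOn
    (fun x hx ↦ hasDerivAt_rpow_const (.inl (pos_of_mem hx).ne'))
    (fun x hx ↦ by have := pos_of_mem hx; positivity)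

lemma integral_rpow_mul_one_sub_rpow_rpow (ha : 0 < a) (hb : 0 < b) (hp : 0 < p) :
    ∫ x in (0 : ℝ)..1, x ^ (a - 1) * (1 - x ^ p) ^ (b - 1) = beta (a / p) b / p := by
  have substitution := integral_comp_rpow (fun u ↦ u ^ (a / p - 1) * (1 - u) ^ (b - 1))
    le_rfl zero_le_one hp
  rw [zero_rpow hp.ne', one_rpow, integral_rpow_mul_one_sub_rpow (div_pos ha hp) hb]
    at substitution
  rw [← substitution, eq_div_iff hp.ne', mul_comm, ← intervalIntegral.integral_const_mul]
  refine intervalIntegral.integral_congr_Ioo_of_le zero_le_one fun x hx ↦ ?_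
  have split_rpow : x ^ (a - 1) = x ^ (p - 1) * (x ^ p) ^ (a / p - 1) := by
    rw [← rpow_mul hx.1.le, ← rpow_add hx.1]
    congr 1
    field_simp
    ring
  simp only [split_rpow, smul_eq_mul]
  ring

lemma integral_one_div_sqrt_one_sub_pow {n : ℕ} (hn : n ≠ 0) :
    ∫ x in (0 : ℝ)..1, 1 / √(1 - x ^ n) = beta (1 / n) (1 / 2) / n := by
  rw [← integral_rpow_mul_one_sub_rpow_rpow one_pos one_half_pos (by positivity : (0 : ℝ) < n)]
  refine intervalIntegral.integral_congr fun x hx ↦ ?_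
  rw [Set.uIcc_of_le zero_le_one] at hx
  have radicand_nonneg : 0 ≤ 1 - x ^ n := sub_nonneg.2 (pow_le_one₀ hx.1 hx.2)
  simp only [sub_self, rpow_zero, one_mul, rpow_natCast]
  rw [show (1 / 2 - 1 : ℝ) = -(1 / 2) by norm_num, rpow_neg radicand_nonneg, ← sqrt_eq_rpow,
    one_div]

end BetaIntegral

lemma Gamma_one_fourth_mul_Gamma_three_fourths : Gamma (1 / 4) * Gamma (3 / 4) = √2 * π := by
  have reflection := Gamma_mul_Gamma_one_sub (1 / 4)
  rw [mul_one_div, sin_pi_div_four, show (1 - 1 / 4 : ℝ) = 3 / 4 by norm_num] at reflection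
  rw [reflection]
  field_simp
  rw [sq_sqrt zero_le_two]

lemma beta_one_fourth_one_half : beta (1 / 4) (1 / 2) = Gamma (1 / 4) ^ 2 / √(2 * π) := by
  have hΓ : 0 < Gamma (3 / 4) := Gamma_pos_of_pos (by norm_num)
  rw [beta, Gamma_one_half_eq, show (1 / 4 + 1 / 2 : ℝ) = 3 / 4 by norm_num,
    div_eq_div_iff hΓ.ne' (by positivity)]
  calc
    Gamma (1 / 4) * √π * √(2 * π) = Gamma (1 / 4) * (√2 * (√π * √π)) := by
      rw [sqrt_mul zero_le_two]
      ring
    _ = Gamma (1 / 4) * (Gamma (1 / 4) * Gamma (3 / 4)) := by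
      rw [mul_self_sqrt pi_nonneg, Gamma_one_fourth_mul_Gamma_three_fourths]
    _ = Gamma (1 / 4) ^ 2 * Gamma (3 / 4) := by ring

lemma integral_cos_smul_comp_sin {E : Type*} [NormedAddCommGroup E] [NormedSpace ℝ E]
    (g : ℝ → E) {a b : ℝ} (ha : a ∈ Set.Icc (-(π / 2)) (π / 2))
    (hb : b ∈ Set.Icc (-(π / 2)) (π / 2)) :
    ∫ θ in a..b, cos θ • g (sin θ) = ∫ x in (sin a)..(sin b), g x :=
  intervalIntegral.integral_deriv_smul_comp_of_deriv_nonneg continuousOn_sin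
    (fun θ _ ↦ hasDerivAt_sin θ)
    (fun _ hθ ↦ cos_nonneg_of_mem_Icc
      ⟨(le_min ha.1 hb.1).trans hθ.1.le, hθ.2.le.trans (max_le ha.2 hb.2)⟩)

lemma integral_one_div_sqrt_one_sub_mul_sin_sq (m : ℝ) :
    ∫ θ in (0 : ℝ)..(π / 2), 1 / √(1 - m * sin θ ^ 2) =
      ∫ x in (0 : ℝ)..1, 1 / √((1 - x ^ 2) * (1 - m * x ^ 2)) := by
  have substitution := integral_cos_smul_comp_sin
    (fun x ↦ 1 / √((1 - x ^ 2) * (1 - m * x ^ 2))) (a := 0) (b := π / 2)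
    ⟨by linarith [pi_pos], by positivity⟩ ⟨by linarith [pi_pos], le_rfl⟩
  rw [sin_zero, sin_pi_div_two] at substitution
  rw [← substitution]
  refine intervalIntegral.integral_congr_Ioo_of_le (by positivity) fun θ hθ ↦ ?_
  have hcos : 0 < cos θ := cos_pos_of_mem_Ioo ⟨by linarith [hθ.1, pi_pos], hθ.2⟩
  simp only [smul_eq_mul]
  rw [← cos_sq', sqrt_mul (sq_nonneg _), sqrt_sq hcos.le]
  field_simp

/-- Kummer evaluation of ₂F₁(1/2,1/2;1;−1) in complete-elliptic-integral form. -/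
theorem kummer_integral_evaluation :
    (2 / π) * ∫ θ in (0:ℝ)..(π/2), 1 / Real.sqrt (1 + Real.sin θ ^ 2) =
      Real.Gamma (1/4) ^ 2 / (2 * π) ^ ((3:ℝ)/2) := by
  have elliptic_integral :
      ∫ θ in (0 : ℝ)..(π / 2), 1 / √(1 + sin θ ^ 2) = Gamma (1 / 4) ^ 2 / √(2 * π) / 4 := calc
    _ = ∫ θ in (0 : ℝ)..(π / 2), 1 / √(1 - (-1) * sin θ ^ 2) := by
      simp only [neg_one_mul, sub_neg_eq_add]
    _ = ∫ x in (0 : ℝ)..1, 1 / √((1 - x ^ 2) * (1 - (-1) * x ^ 2)) :=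
      integral_one_div_sqrt_one_sub_mul_sin_sq (-1)
    _ = ∫ x in (0 : ℝ)..1, 1 / √(1 - x ^ 4) := by ring_nf
    _ = beta (1 / 4) (1 / 2) / 4 := mod_cast integral_one_div_sqrt_one_sub_pow four_ne_zero
    _ = Gamma (1 / 4) ^ 2 / √(2 * π) / 4 := by rw [beta_one_fourth_one_half]
  have rpow_three_halves : (2 * π) ^ ((3 : ℝ) / 2) = 2 * π * √(2 * π) := by
    rw [rpow_div_two_eq_sqrt _ two_pi_pos.le, rpow_ofNat, pow_succ, sq_sqrt two_pi_pos.le]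
  rw [elliptic_integral, rpow_three_halves]
  field_simp
  norm_num
end
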